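/- arXiv:cs/0612120 — 3 statements merged into one kernel-verified Lean document; each statement's English description precedes it below -/
import Mathlib

section
/- Let Σ be a set, 𝒜 a complete lattice satisfying the descending chain condition, together with a Galois insertion (α, γ) of 𝒜 into the dual lattice of Moore families on Σ, and F a set of finitary operations on ℘(Σ) such that either (i) for every Moore family ℳ on Σ, α(M(F(ℳ))) = α(M(F(γ(α(ℳ))))), or (ii) for every a ∈ 𝒜 the forward F-complete shell S_F(γ(a)) lies in the image of γ. Then for every a ∈ 𝒜, the element α(S_F(γ(a))) is the greatest element of the set {b ∈ 𝒜 : b ≤ a and Refiners_F^𝒜(b) = ∅}, i.e. it is the F-stable shell of a. -/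
universe u v

variable {X : Type u} {A : Type v}

/-- A Moore family: a collection of subsets closed under arbitrary intersections. -/
def IsMoore (M : Set (Set X)) : Prop := ∀ S ⊆ M, ⋂₀ S ∈ M

/-- The least Moore family containing `C`. -/
def mClose (C : Set (Set X)) : Set (Set X) := ⋂₀ {M | IsMoore M ∧ C ⊆ M}

/-- A disjunctive Moore family: additionally closed under arbitrary unions. -/
def IsDisjMoore (M : Set (Set X)) : Prop := IsMoore M ∧ ∀ S ⊆ M, ⋃₀ S ∈ M

/-- The least disjunctive Moore family containing `C`. -/
def dClose (C : Set (Set X)) : Set (Set X) := ⋂₀ {M | IsDisjMoore M ∧ C ⊆ M}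

/-- The closure operator associated with a Moore family. -/
def mu (M : Set (Set X)) (S : Set X) : Set X := ⋂₀ {T | T ∈ M ∧ S ⊆ T}

/-- The partition (as a setoid) induced by a Moore family:
`s ≡ s'` iff `μ {s} = μ {s'}`. -/
def prS (M : Set (Set X)) : Setoid X :=
  ⟨fun s t => mu M {s} = mu M {t}, ⟨fun _ => rfl, Eq.symm, Eq.trans⟩⟩

/-- The Moore family of all `P`-saturated sets (unions of blocks of `P`). -/
def padS (P : Setoid X) : Set (Set X) := {S | ∀ s ∈ S, ∀ t, P.r s t → t ∈ S}

/-- `P` refines `Q`: every block of `P` is contained in a block of `Q`. -/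
def refines (P Q : Setoid X) : Prop := ∀ s t, P.r s t → Q.r s t

/-- A finitary operation on `℘(X)`: an arity `n` together with a map `℘(X)^n → ℘(X)`. -/
abbrev Op (X : Type u) := (n : ℕ) × ((Fin n → Set X) → Set X)

/-- The image `F(S)` of a set of operations on a collection of subsets. -/
def imageF (F : Set (Op X)) (S : Set (Set X)) : Set (Set X) :=
  {T | ∃ f ∈ F, ∃ args : Fin f.1 → Set X, (∀ i, args i ∈ S) ∧ T = f.2 args}

/-- Forward `F`-completeness: `F(S) ⊆ S`. -/
def FComplete (F : Set (Op X)) (S : Set (Set X)) : Prop := imageF F S ⊆ S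

/-- The forward `F`-complete shell: the least forward `F`-complete Moore family
containing `M`. -/
def shellF (F : Set (Op X)) (M : Set (Set X)) : Set (Set X) :=
  ⋂₀ {B | IsMoore B ∧ FComplete F B ∧ M ⊆ B}

/-- Predecessor operator of a transition relation. -/
def preR (r : X → X → Prop) (S : Set X) : Set X := {s | ∃ t ∈ S, r s t}

/-- The split of a partition `P` by a set `T`: blocks are the nonempty sets
among `B ∩ T` and `B \ T` for blocks `B` of `P`. -/
def splitS (T : Set X) (P : Setoid X) : Setoid X :=
  ⟨fun s t => P.r s t ∧ (s ∈ T ↔ t ∈ T),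
   ⟨fun s => ⟨P.iseqv.refl s, Iff.rfl⟩,
    fun h => ⟨P.iseqv.symm h.1, h.2.symm⟩,
    fun h1 h2 => ⟨P.iseqv.trans h1.1 h2.1, h1.2.trans h2.2⟩⟩⟩

/-- Abstract refinement: `refine_f^A(S, a) = α(M(γ(a) ∪ {f(S)}))`. -/
def refineA [Preorder A] (al : Set (Set X) → A) (ga : A → Set (Set X))
    (f : Op X) (S : Fin f.1 → Set X) (a : A) : A :=
  al (mClose (ga a ∪ {f.2 S}))

/-- Abstract refiners: tuples in `γ(a)^n` whose refinement is strictly below `a`. -/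
def refinersA [Preorder A] (al : Set (Set X) → A) (ga : A → Set (Set X))
    (f : Op X) (a : A) : Set (Fin f.1 → Set X) :=
  {S | (∀ i, S i ∈ ga a) ∧ refineA al ga f S a < a}

/-- One step of the GPT algorithm: refine by some refiner of some `f ∈ F`. -/
def StepA [Preorder A] (F : Set (Op X)) (al : Set (Set X) → A) (ga : A → Set (Set X))
    (a b : A) : Prop :=
  ∃ f ∈ F, ∃ S : Fin f.1 → Set X, S ∈ refinersA al ga f a ∧ b = refineA al ga f S a

/-- The setoid induced by a collection of sets: `s ≡ t` iff no set of the
collection separates them. -/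
def indSetoid (C : Set (Set X)) : Setoid X :=
  ⟨fun s t => ∀ T ∈ C, (s ∈ T ↔ t ∈ T),
   ⟨fun _ _ _ => Iff.rfl, fun h T hT => (h T hT).symm,
    fun h1 h2 T hT => (h1 T hT).trans (h2 T hT)⟩⟩

/-- The block of `P` containing `s`. -/
def blockOf (P : Setoid X) (s : X) : Set X := {t | P.r s t}

/-- The existential-until operator `EU(S₁, S₂)`. -/
def EUset (r : X → X → Prop) (S1 S2 : Set X) : Set X :=
  S2 ∪ {s | s ∈ S1 ∧ ∃ (n : ℕ) (p : ℕ → X), p 0 = s ∧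
    (∀ i < n, p i ∈ S1 ∧ r (p i) (p (i+1))) ∧ p n ∈ S2}

/-!
An element `b` has no refiners exactly when `γ(b)` is forward `F`-complete: adding `f(S)` to `γ(b)`
can only move `b` down, and leaves it in place precisely when `f(S)` already lies in `γ(b)`.
Let `𝒮` be the forward `F`-complete shell of `γ(a)`. If `b ≤ a` has no refiners, then `γ(b)` is a
forward `F`-complete Moore family containing `γ(a)`, hence `𝒮`, so `b ≤ α(𝒮)`.
It remains to see that `γ(α(𝒮))` is forward `F`-complete. Under (ii) it equals `𝒮`. Under (i),
`F(𝒮) ⊆ 𝒮 ⊆ γ(α(𝒮))` gives `α(𝒮) ≤ α(M(F(𝒮))) = α(M(F(γ(α(𝒮)))))`, and by adjunction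
`F(γ(α(𝒮))) ⊆ γ(α(𝒮))`.
-/

theorem IsMoore.sInter {𝒞 : Set (Set (Set X))} (h : ∀ M ∈ 𝒞, IsMoore M) : IsMoore (⋂₀ 𝒞) :=
  fun S hS M hM => h M hM S (hS.trans (Set.sInter_subset_of_mem hM))

theorem isMoore_mClose (C : Set (Set X)) : IsMoore (mClose C) :=
  IsMoore.sInter fun _ hM => hM.1

theorem subset_mClose (C : Set (Set X)) : C ⊆ mClose C :=
  Set.subset_sInter fun _ hM => hM.2

theorem IsMoore.mClose_subset_iff {C M : Set (Set X)} (hM : IsMoore M) :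
    mClose C ⊆ M ↔ C ⊆ M :=
  ⟨(subset_mClose C).trans, fun h => Set.sInter_subset_of_mem ⟨hM, h⟩⟩

section Shell

variable {F : Set (Op X)} {M B : Set (Set X)}

theorem fComplete_iff :
    FComplete F M ↔ ∀ f ∈ F, ∀ S : Fin f.1 → Set X, (∀ i, S i ∈ M) → f.2 S ∈ M := by
  constructor
  · exact fun h f hf S hS => h ⟨f, hf, S, hS, rfl⟩
  · rintro h _ ⟨f, hf, S, hS, rfl⟩
    exact h f hf S hS

theorem FComplete.sInter {𝒞 : Set (Set (Set X))} (h : ∀ M ∈ 𝒞, FComplete F M) :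
    FComplete F (⋂₀ 𝒞) :=
  fComplete_iff.2 fun f hf S hS M hM => fComplete_iff.1 (h M hM) f hf S fun i => hS i M hM

theorem isMoore_shellF (F : Set (Op X)) (M : Set (Set X)) : IsMoore (shellF F M) :=
  IsMoore.sInter fun _ hB => hB.1

theorem fComplete_shellF (F : Set (Op X)) (M : Set (Set X)) : FComplete F (shellF F M) :=
  FComplete.sInter fun _ hB => hB.2.1

theorem subset_shellF (F : Set (Op X)) (M : Set (Set X)) : M ⊆ shellF F M :=
  Set.subset_sInter fun _ hB => hB.2.2

theorem shellF_subset (hB : IsMoore B) (hFB : FComplete F B) (hMB : M ⊆ B) : shellF F M ⊆ B :=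
  Set.sInter_subset_of_mem ⟨hB, hFB, hMB⟩

end Shell

/-- Galois insertion `(al, ga)` of `A` into the dual lattice of Moore families on `X`: each `a : A`
stands for the Moore family `ga a`, and `al M` is the best approximation in `A` of the Moore
family `M`. Moore families are encoded as a predicate rather than a type, so `al` is unconstrained
on collections of sets that are not Moore families. -/
structure IsMooreInsertion [Preorder A] (al : Set (Set X) → A) (ga : A → Set (Set X)) : Prop where
  isMoore_ga (a : A) : IsMoore (ga a)
  le_al_iff (M : Set (Set X)) (hM : IsMoore M) (a : A) : a ≤ al M ↔ M ⊆ ga a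
  al_ga (a : A) : al (ga a) = a

namespace IsMooreInsertion

variable [Preorder A] {al : Set (Set X) → A} {ga : A → Set (Set X)}
  {F : Set (Op X)} {f : Op X} {M C : Set (Set X)} {a b : A}

theorem le_iff (h : IsMooreInsertion al ga) : b ≤ a ↔ ga a ⊆ ga b := by
  rw [← h.le_al_iff _ (h.isMoore_ga a), h.al_ga]

theorem subset_ga_al (h : IsMooreInsertion al ga) (hM : IsMoore M) : M ⊆ ga (al M) :=
  (h.le_al_iff M hM _).1 le_rfl

theorem al_le (h : IsMooreInsertion al ga) (hM : IsMoore M) (haM : ga a ⊆ M) : al M ≤ a :=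
  h.le_iff.2 (haM.trans (h.subset_ga_al hM))

theorem ga_al_of_mem_range (h : IsMooreInsertion al ga) (hM : M ∈ Set.range ga) :
    ga (al M) = M := by
  obtain ⟨c, rfl⟩ := hM
  rw [h.al_ga]

theorem le_al_mClose_iff (h : IsMooreInsertion al ga) : a ≤ al (mClose C) ↔ C ⊆ ga a := by
  rw [h.le_al_iff _ (isMoore_mClose C), (h.isMoore_ga a).mClose_subset_iff]

theorem refineA_le (h : IsMooreInsertion al ga) (f : Op X) (S : Fin f.1 → Set X) (a : A) :
    refineA al ga f S a ≤ a :=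
  h.al_le (isMoore_mClose _) (Set.subset_union_left.trans (subset_mClose _))

theorem le_refineA_iff (h : IsMooreInsertion al ga) {S : Fin f.1 → Set X} :
    a ≤ refineA al ga f S a ↔ f.2 S ∈ ga a := by
  rw [refineA, h.le_al_mClose_iff, Set.union_subset_iff, Set.singleton_subset_iff,
    and_iff_right subset_rfl]

theorem mem_refinersA_iff (h : IsMooreInsertion al ga) {S : Fin f.1 → Set X} :
    S ∈ refinersA al ga f a ↔ (∀ i, S i ∈ ga a) ∧ f.2 S ∉ ga a := by
  rw [← h.le_refineA_iff]
  exact and_congr_right fun _ => lt_iff_le_not_ge.trans (and_iff_right (h.refineA_le f S a))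

theorem forall_refinersA_eq_empty_iff (h : IsMooreInsertion al ga) :
    (∀ f ∈ F, refinersA al ga f a = ∅) ↔ FComplete F (ga a) := by
  simp only [fComplete_iff, Set.eq_empty_iff_forall_notMem, h.mem_refinersA_iff, not_and, not_not]

theorem fComplete_ga_al (h : IsMooreInsertion al ga) (hM : IsMoore M) (hFM : FComplete F M)
    (hle : al (mClose (imageF F M)) ≤ al (mClose (imageF F (ga (al M))))) :
    FComplete F (ga (al M)) :=
  have al_le_image : al M ≤ al (mClose (imageF F M)) :=
    h.le_al_mClose_iff.2 (hFM.trans (h.subset_ga_al hM))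
  h.le_al_mClose_iff.1 (al_le_image.trans hle)

theorem isGreatest_al_shellF (h : IsMooreInsertion al ga)
    (hF : FComplete F (ga (al (shellF F (ga a))))) :
    IsGreatest {b : A | b ≤ a ∧ ∀ f ∈ F, refinersA al ga f b = ∅} (al (shellF F (ga a))) := by
  have hS : IsMoore (shellF F (ga a)) := isMoore_shellF F (ga a)
  simp only [h.forall_refinersA_eq_empty_iff]
  refine ⟨⟨h.al_le hS (subset_shellF F (ga a)), hF⟩, ?_⟩
  rintro b ⟨hba, hFb⟩
  exact (h.le_al_iff _ hS b).2 (shellF_subset (h.isMoore_ga b) hFb (h.le_iff.1 hba))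

end IsMooreInsertion

theorem stmt1_general [Preorder A] {al : Set (Set X) → A} {ga : A → Set (Set X)}
    (h : IsMooreInsertion al ga) (F : Set (Op X))
    (hcond : (∀ M : Set (Set X), IsMoore M →
                al (mClose (imageF F M)) = al (mClose (imageF F (ga (al M))))) ∨
             (∀ a : A, shellF F (ga a) ∈ Set.range ga))
    (a : A) :
    IsGreatest {b : A | b ≤ a ∧ ∀ f ∈ F, refinersA al ga f b = ∅}
      (al (shellF F (ga a))) := by
  have hS : IsMoore (shellF F (ga a)) := isMoore_shellF F (ga a)
  have hFS : FComplete F (shellF F (ga a)) := fComplete_shellF F (ga a)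
  apply h.isGreatest_al_shellF
  rcases hcond with himage | hrange
  · exact h.fComplete_ga_al hS hFS (himage _ hS).le
  · rwa [h.ga_al_of_mem_range (hrange a)]

theorem stmt1 [CompleteLattice A]
    (hdcc : ∀ g : ℕ → A, ¬ StrictAnti g)
    (al : Set (Set X) → A) (ga : A → Set (Set X))
    (hga : ∀ a : A, IsMoore (ga a))
    (hadj : ∀ M : Set (Set X), IsMoore M → ∀ a : A, a ≤ al M ↔ M ⊆ ga a)
    (hins : ∀ a : A, al (ga a) = a)
    (F : Set (Op X))
    (hcond : (∀ M : Set (Set X), IsMoore M →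
                al (mClose (imageF F M)) = al (mClose (imageF F (ga (al M))))) ∨
             (∀ a : A, shellF F (ga a) ∈ Set.range ga))
    (a : A) :
    IsGreatest {b : A | b ≤ a ∧ ∀ f ∈ F, refinersA al ga f b = ∅}
      (al (shellF F (ga a))) :=
  stmt1_general ⟨hga, hadj, hins⟩ F hcond a
end

section
/- Let Σ be a set, 𝒜 a disjunctive Moore family on Σ with closure μ, S ⊆ Σ, and 𝒜' = D(𝒜 ∪ {S}) with closure μ'. Let B', C' be blocks of pr(𝒜') and let parent(B') denote the unique block of pr(𝒜) containing B'. Then: (i) if B' ∩ S = ∅, then μ'(C') ⊆ μ'(B') if and only if C' ⊆ μ(parent(B')); (ii) if B' ∩ S ≠ ∅, then μ'(C') ⊆ μ'(B') if and only if C' ⊆ μ(parent(B')) ∩ S. -/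
universe u v

variable {X : Type u} {A : Type v}

/-
For points `x` and `y`, the sets `T` with `x ∈ T → y ∈ T` form a disjunctive Moore family. Hence
passing from a collection `N` to `D(N)` separates no further points, and the closure of a point
in `D(𝒜 ∪ {S})` is its closure in `𝒜`, cut down to `S` when the point lies in `S`. Closing a block
is the same as closing any one of its points, so the closures of a block and of its parent
can be compared at any one point of the smaller block.
-/

section Closure

variable {M N : Set (Set X)} {S T U : Set X}

theorem subset_mu : T ⊆ mu M T :=
  Set.subset_sInter fun _ hU => hU.2

theorem mu_subset (hU : U ∈ M) (hTU : T ⊆ U) : mu M T ⊆ U :=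
  Set.sInter_subset_of_mem ⟨hU, hTU⟩

theorem mu_subset_mu_iff : mu M T ⊆ mu M U ↔ T ⊆ mu M U :=
  ⟨subset_mu.trans, fun h =>
    Set.subset_sInter fun _ hV => mu_subset hV.1 (h.trans (mu_subset hV.1 hV.2))⟩

theorem mu_anti_left (h : M ⊆ N) : mu N T ⊆ mu M T :=
  Set.sInter_subset_sInter fun _ hU => ⟨h hU.1, hU.2⟩

theorem mem_mu_singleton {x y : X} : y ∈ mu M {x} ↔ ∀ V ∈ M, x ∈ V → y ∈ V := by
  simp only [mu, Set.mem_sInter, Set.mem_ofPred_eq, Set.singleton_subset_iff, and_imp]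

theorem mu_union_singleton_of_subset (h : T ⊆ S) : mu (M ∪ {S}) T = mu M T ∩ S := by
  apply Set.Subset.antisymm
  · exact Set.subset_inter (mu_anti_left Set.subset_union_left) (mu_subset (.inr rfl) h)
  · rintro y ⟨hyM, hyS⟩ V ⟨hV | rfl, hTV⟩
    exacts [mu_subset hV hTV hyM, hyS]

theorem mu_union_singleton_of_not_subset (h : ¬T ⊆ S) : mu (M ∪ {S}) T = mu M T := by
  apply Set.Subset.antisymm (mu_anti_left Set.subset_union_left)
  rintro y hy V ⟨hV | rfl, hTV⟩
  exacts [mu_subset hV hTV hy, absurd hTV h]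

end Closure

section DisjunctiveClosure

variable {K N : Set (Set X)}

theorem subset_dClose : N ⊆ dClose N :=
  Set.subset_sInter fun _ hK => hK.2

theorem dClose_subset (hK : IsDisjMoore K) (hNK : N ⊆ K) : dClose N ⊆ K :=
  Set.sInter_subset_of_mem ⟨hK, hNK⟩

theorem isDisjMoore_setOf_mem_imp_mem (x y : X) : IsDisjMoore {T : Set X | x ∈ T → y ∈ T} :=
  ⟨fun _ hK hx T hT => hK hT (hx T hT), fun _ hK ⟨T, hT, hx⟩ => ⟨T, hT, hK hT hx⟩⟩

theorem mu_dClose_singleton (N : Set (Set X)) (x : X) : mu (dClose N) {x} = mu N {x} := by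
  apply Set.Subset.antisymm (mu_anti_left subset_dClose)
  intro y hy
  rw [mem_mu_singleton] at hy ⊢
  exact dClose_subset (isDisjMoore_setOf_mem_imp_mem x y) hy

end DisjunctiveClosure

section Blocks

variable {M : Set (Set X)} {S B P : Set X} {x : X}

theorem mu_eq_mu_singleton_of_mem_classes (hB : B ∈ (prS M).classes) (hx : x ∈ B) :
    mu M B = mu M {x} := by
  apply Set.Subset.antisymm <;> rw [mu_subset_mu_iff]
  · intro t ht
    have htx : mu M {t} = mu M {x} := (prS M).rel_iff_exists_classes.2 ⟨B, hB, ht, hx⟩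
    exact htx ▸ subset_mu rfl
  · exact Set.singleton_subset_iff.2 (subset_mu hx)

theorem mu_dClose_union_singleton_of_notMem (hB : B ∈ (prS (dClose (M ∪ {S}))).classes)
    (hP : P ∈ (prS M).classes) (hBP : B ⊆ P) (hxB : x ∈ B) (hxS : x ∉ S) :
    mu (dClose (M ∪ {S})) B = mu M P := by
  rw [mu_eq_mu_singleton_of_mem_classes hB hxB, mu_dClose_singleton,
    mu_union_singleton_of_not_subset (by rwa [Set.singleton_subset_iff]),
    mu_eq_mu_singleton_of_mem_classes hP (hBP hxB)]

theorem mu_dClose_union_singleton_of_mem (hB : B ∈ (prS (dClose (M ∪ {S}))).classes)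
    (hP : P ∈ (prS M).classes) (hBP : B ⊆ P) (hxB : x ∈ B) (hxS : x ∈ S) :
    mu (dClose (M ∪ {S})) B = mu M P ∩ S := by
  rw [mu_eq_mu_singleton_of_mem_classes hB hxB, mu_dClose_singleton,
    mu_union_singleton_of_subset (Set.singleton_subset_iff.2 hxS),
    mu_eq_mu_singleton_of_mem_classes hP (hBP hxB)]

end Blocks

theorem stmt12_general (M : Set (Set X)) (S B C P : Set X)
    (hB : B ∈ (prS (dClose (M ∪ {S}))).classes) (hP : P ∈ (prS M).classes) (hBP : B ⊆ P) :
    (B ∩ S = ∅ →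
      (mu (dClose (M ∪ {S})) C ⊆ mu (dClose (M ∪ {S})) B ↔ C ⊆ mu M P)) ∧
    ((B ∩ S).Nonempty →
      (mu (dClose (M ∪ {S})) C ⊆ mu (dClose (M ∪ {S})) B ↔ C ⊆ mu M P ∩ S)) := by
  rw [mu_subset_mu_iff]
  constructor
  · intro hBS
    obtain ⟨x, hxB⟩ := Setoid.nonempty_of_mem_partition (Setoid.isPartition_classes _) hB
    have hxS : x ∉ S := fun hxS => Set.notMem_empty x (hBS ▸ ⟨hxB, hxS⟩)
    rw [mu_dClose_union_singleton_of_notMem hB hP hBP hxB hxS]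
  · rintro ⟨x, hxB, hxS⟩
    rw [mu_dClose_union_singleton_of_mem hB hP hBP hxB hxS]

theorem stmt12 (M : Set (Set X)) (hM : IsDisjMoore M) (S : Set X)
    (B' C' : Set X)
    (hB' : B' ∈ (prS (dClose (M ∪ {S}))).classes)
    (hC' : C' ∈ (prS (dClose (M ∪ {S}))).classes)
    (PB : Set X) (hPB : PB ∈ (prS M).classes) (hBP : B' ⊆ PB) :
    (B' ∩ S = ∅ →
      (mu (dClose (M ∪ {S})) C' ⊆ mu (dClose (M ∪ {S})) B' ↔ C' ⊆ mu M PB)) ∧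
    ((B' ∩ S).Nonempty →
      (mu (dClose (M ∪ {S})) C' ⊆ mu (dClose (M ∪ {S})) B' ↔ C' ⊆ mu M PB ∩ S)) :=
  stmt12_general M S B' C' PB hB' hPB hBP
end

section
/- Let Σ be a set. A Moore family ℳ on Σ equals pad(P) for some partition P of Σ (i.e. ℳ is partitioning) if and only if ℳ is closed under set complement, that is, X ∈ ℳ implies Σ ∖ X ∈ ℳ. In that case, P = pr(ℳ). -/
universe u v

variable {X : Type u} {A : Type v}

/-!
Two points have the same closure `mu M {s}` exactly when no set of `M` separates them, so `pr(M)` is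
`indSetoid M`; this recovers `P` from `padS P` because the blocks of `P` are themselves saturated.
If `M` is closed under complements, then `t ∈ mu M {s}` already forces that no set of `M` separates
`s` from `t`, so each block of `pr(M)` is a closure `mu M {s}` and lies in `M`; by De Morgan `M` is
closed under unions, hence contains every saturated set.
-/

theorem subset_mu_s16 (M : Set (Set X)) (S : Set X) : S ⊆ mu M S :=
  Set.subset_sInter fun _ hT => hT.2

theorem IsMoore.mu_mem {M : Set (Set X)} (hM : IsMoore M) (S : Set X) : mu M S ∈ M :=
  hM _ fun _ hT => hT.1

theorem mem_mu_singleton_s16 {M : Set (Set X)} {s t : X} :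
    t ∈ mu M {s} ↔ ∀ T ∈ M, s ∈ T → t ∈ T := by
  simp only [mu, Set.mem_sInter, Set.mem_ofPred_eq, Set.singleton_subset_iff, and_imp]

theorem prS_eq_indSetoid (M : Set (Set X)) : prS M = indSetoid M := by
  ext s t
  change mu M {s} = mu M {t} ↔ ∀ T ∈ M, (s ∈ T ↔ t ∈ T)
  constructor
  · intro h T hT
    have hst : t ∈ mu M {s} := h ▸ subset_mu_s16 M {t} rfl
    have hts : s ∈ mu M {t} := h ▸ subset_mu_s16 M {s} rfl
    exact ⟨mem_mu_singleton_s16.1 hst T hT, mem_mu_singleton_s16.1 hts T hT⟩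
  · intro h
    ext x
    rw [mem_mu_singleton_s16, mem_mu_singleton_s16]
    exact forall₂_congr fun T hT => imp_congr_left (h T hT)

theorem mem_iff_of_mem_padS {P : Setoid X} {S : Set X} (hS : S ∈ padS P) {s t : X}
    (h : P.r s t) : s ∈ S ↔ t ∈ S :=
  ⟨fun hs => hS s hs t h, fun ht => hS t ht s (P.symm h)⟩

theorem compl_mem_padS {P : Setoid X} {S : Set X} (hS : S ∈ padS P) : Sᶜ ∈ padS P :=
  fun _ hs _ h ht => hs ((mem_iff_of_mem_padS hS h).2 ht)

theorem blockOf_mem_padS (P : Setoid X) (s : X) : blockOf P s ∈ padS P :=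
  fun _ ht _ h => P.trans ht h

theorem biUnion_blockOf_eq {P : Setoid X} {S : Set X} (hS : S ∈ padS P) :
    ⋃ s ∈ S, blockOf P s = S :=
  (Set.iUnion₂_subset hS).antisymm fun s hs => Set.mem_biUnion hs (P.refl s)

theorem indSetoid_padS (P : Setoid X) : indSetoid (padS P) = P := by
  ext s t
  exact ⟨fun h => (h _ (blockOf_mem_padS P s)).1 (P.refl s),
    fun h _ hT => mem_iff_of_mem_padS hT h⟩

theorem subset_padS_indSetoid (C : Set (Set X)) : C ⊆ padS (indSetoid C) :=
  fun T hT _ hs _ h => (h T hT).1 hs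

theorem IsMoore.isDisjMoore_of_compl_mem {M : Set (Set X)} (hM : IsMoore M)
    (hc : ∀ T ∈ M, Tᶜ ∈ M) : IsDisjMoore M := by
  refine ⟨hM, fun S hS => ?_⟩
  rw [Set.sUnion_eq_compl_sInter_compl]
  exact hc _ (hM _ (Set.image_subset_iff.2 fun T hT => hc T (hS hT)))

theorem mu_singleton_eq_blockOf_indSetoid {M : Set (Set X)} (hc : ∀ T ∈ M, Tᶜ ∈ M) (s : X) :
    mu M {s} = blockOf (indSetoid M) s := by
  ext t
  rw [mem_mu_singleton_s16]
  exact ⟨fun h T hT => ⟨h T hT, fun ht => by_contra fun hs => h Tᶜ (hc T hT) hs ht⟩,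
    fun h T hT => (h T hT).1⟩

theorem IsMoore.padS_indSetoid {M : Set (Set X)} (hM : IsMoore M) (hc : ∀ T ∈ M, Tᶜ ∈ M) :
    padS (indSetoid M) = M := by
  refine Set.Subset.antisymm (fun S hS => ?_) (subset_padS_indSetoid M)
  have block_mem (s : X) : blockOf (indSetoid M) s ∈ M :=
    mu_singleton_eq_blockOf_indSetoid hc s ▸ hM.mu_mem {s}
  rw [← biUnion_blockOf_eq hS, ← Set.sUnion_image]
  exact (hM.isDisjMoore_of_compl_mem hc).2 _ (Set.image_subset_iff.2 fun s _ => block_mem s)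

theorem stmt16 (M : Set (Set X)) (hM : IsMoore M) :
    ((∃ P : Setoid X, M = padS P) ↔ (∀ T ∈ M, Tᶜ ∈ M)) ∧
    (∀ P : Setoid X, M = padS P → P = prS M) := by
  rw [prS_eq_indSetoid]
  refine ⟨⟨?_, fun hc => ⟨indSetoid M, (hM.padS_indSetoid hc).symm⟩⟩, ?_⟩
  · rintro ⟨P, rfl⟩ T hT
    exact compl_mem_padS hT
  · rintro P rfl
    exact (indSetoid_padS P).symm
end
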